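/- For every integer d ≥ 1, every subset of ℕ^d of size (d+1)! − 1 is coverable; consequently h(ℕ^d) ≥ (d+1)! − 1. -/

import Mathlib

/-- A winning guessing strategy in the hat guessing game on `G` with `q` colors:
each vertex `v` gets a guessing function from colorings of its open neighborhood
to colors, such that for every coloring some vertex guesses its own color. -/
def HatWinning {V : Type*} (G : SimpleGraph V) (q : ℕ) : Prop :=
  ∃ g : (v : V) → ({w : V // G.Adj v w} → Fin q) → Fin q,
    ∀ χ : V → Fin q, ∃ v : V, g v (fun w => χ w.1) = χ v

/-- The hat guessing number of `G`: the largest number of colors for which the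
players have a winning strategy. -/
noncomputable def hatGuessingNumber {V : Type*} (G : SimpleGraph V) : ℕ :=
  sSup {q : ℕ | HatWinning G q}

/-- Sylvester's sequence: `s 0 = 2`, `s (n+1) = s n ^ 2 - s n + 1`. -/
def sylvester : ℕ → ℕ
  | 0 => 2
  | n + 1 => sylvester n ^ 2 - sylvester n + 1

/-- The graph `G_d(N)`: vertices are the vertices of the complete rooted `N`-ary
tree of depth `d` (encoded as lists of child-indices of length at most `d`), and
each vertex is adjacent to all of its ancestors (its proper prefixes). -/
def ancTree (d N : ℕ) : SimpleGraph {l : List (Fin N) // l.length ≤ d} where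
  Adj v w := v ≠ w ∧ (v.1 <+: w.1 ∨ w.1 <+: v.1)
  symm := by
    constructor
    intro v w h
    exact ⟨h.1.symm, h.2.symm⟩
  loopless := by
    constructor
    intro v h
    exact h.1 rfl

/-- The book graph `B_{d,n}`: a spine of `d` vertices forming a clique, completely
joined to `n` pages forming an independent set. -/
def bookGraph (d n : ℕ) : SimpleGraph (Fin d ⊕ Fin n) where
  Adj x y := x ≠ y ∧ (x.isLeft ∨ y.isLeft)
  symm := by
    constructor
    intro x y h
    exact ⟨h.1.symm, h.2.symm⟩
  loopless := by
    constructor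
    intro x h
    exact h.1 rfl

/-- A set `S ⊆ ℕ^d` is coverable if it can be partitioned into parts `S_1, …, S_d`
such that `S_i` contains at most one point on every line parallel to the `i`-th
coordinate axis, i.e. two distinct points in part `i` differ in some coordinate
other than the `i`-th. -/
def Coverable {d : ℕ} (S : Set (Fin d → ℕ)) : Prop :=
  ∃ f : (Fin d → ℕ) → Fin d, ∀ x ∈ S, ∀ y ∈ S,
    x ≠ y → f x = f y → ∃ j : Fin d, j ≠ f x ∧ x j ≠ y j

/-- `hcov d` is `h(ℕ^d)`: the largest `t` such that every `t`-element subset of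
`ℕ^d` is coverable. -/
noncomputable def hcov (d : ℕ) : ℕ :=
  sSup {t : ℕ | ∀ S : Set (Fin d → ℕ), S.Finite → S.ncard = t → Coverable S}

/-- `p` is a left-to-right path with `k` edges in a graph on `Fin n` with the
natural vertex ordering: a strictly increasing sequence of `k+1` vertices in which
consecutive vertices are adjacent. -/
def IsLTRPath {n : ℕ} (G : SimpleGraph (Fin n)) (k : ℕ) (p : Fin (k + 1) → Fin n) : Prop :=
  StrictMono p ∧ ∀ i : Fin k, G.Adj (p i.castSucc) (p i.succ)

/-- The depth of a vertex `v`: the largest number of edges in a left-to-right path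
ending at `v`. -/
noncomputable def ltrDepth {n : ℕ} (G : SimpleGraph (Fin n)) (v : Fin n) : ℕ :=
  sSup {k : ℕ | ∃ p : Fin (k + 1) → Fin n, IsLTRPath G k p ∧ p (Fin.last k) = v}

/-- If every coordinate in `I` takes at most `#I` values on `S`, then `S` is coverable
using only directions in `I`: colour each point by a sum modulo `#I`. -/
lemma exists_cover_of_card_image_le {ι : Type*} [DecidableEq ι] (I : Finset ι)
    (hI : I.Nonempty) (S : Finset (ι → ℕ)) (hS : ∀ i ∈ I, (S.image (· i)).card ≤ I.card) :
    ∃ f : (ι → ℕ) → ι, (∀ x, f x ∈ I) ∧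
      ∀ x ∈ S, ∀ y ∈ S, x ≠ y → f x = f y → ∃ j, j ≠ f x ∧ x j ≠ y j := by
  have : NeZero I.card := ⟨hI.card_pos.ne'⟩
  have hφ : ∀ i ∈ I, ∃ φ : ℕ → ZMod I.card, Set.InjOn φ (S.image (· i)) := by
    intro i hi
    have hcard : ((S.image (· i) : Finset ℕ) : Set ℕ).encard ≤
        (Set.univ : Set (ZMod I.card)).encard := by
      rw [Set.encard_coe_eq_coe_finsetCard, Set.encard_univ, ENat.card_eq_coe_fintype_card,
        ZMod.card]
      exact_mod_cast hS i hi
    obtain ⟨φ, -, hφ⟩ := (Finset.finite_toSet _).exists_injOn_of_encard_le hcard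
    exact ⟨φ, hφ⟩
  choose! φ hφ using hφ
  let e : ZMod I.card ≃ I := Fintype.equivOfCardEq (by simp [ZMod.card])
  refine ⟨fun x => (e (∑ i ∈ I, φ i (x i))).1, fun x => (e _).2, ?_⟩
  intro x hx y hy hxy hf
  by_contra! hcon
  set k : ι := (e (∑ i ∈ I, φ i (x i))).1
  have hkI : k ∈ I := (e _).2
  have hsum : ∑ i ∈ I, φ i (x i) = ∑ i ∈ I, φ i (y i) := e.injective (Subtype.ext hf)
  have hrest : ∑ i ∈ I.erase k, φ i (x i) = ∑ i ∈ I.erase k, φ i (y i) :=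
    Finset.sum_congr rfl fun i hi => by rw [hcon i (Finset.ne_of_mem_erase hi)]
  rw [← Finset.add_sum_erase I _ hkI, ← Finset.add_sum_erase I _ hkI, hrest] at hsum
  have hval : x k = y k := hφ k hkI (Finset.mem_coe.2 (Finset.mem_image_of_mem _ hx))
    (Finset.mem_coe.2 (Finset.mem_image_of_mem _ hy)) (add_right_cancel hsum)
  refine hxy (funext fun j => ?_)
  by_cases hj : j = k
  · rw [hj, hval]
  · exact hcon j hj

/-- A set of fewer than `(#I + 1)!` points is coverable using only directions in `I`. -/
lemma exists_cover_of_card_lt_factorial {ι : Type*} [DecidableEq ι] [Nonempty ι]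
    (I : Finset ι) (S : Finset (ι → ℕ)) (hS : S.card < (I.card + 1).factorial) :
    ∃ f : (ι → ℕ) → ι, (∀ x ∈ S, f x ∈ I) ∧
      ∀ x ∈ S, ∀ y ∈ S, x ≠ y → f x = f y → ∃ j, j ≠ f x ∧ x j ≠ y j := by
  induction I using Finset.strongInduction generalizing S with
  | H I ihI =>
  induction S using Finset.strongInduction with
  | H S ihS =>
  rcases I.eq_empty_or_nonempty with rfl | hI
  · have hS0 : S = ∅ := by simpa using hS
    subst hS0
    exact ⟨fun _ => Classical.arbitrary ι, by simp, by simp⟩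
  by_cases hbox : ∀ i ∈ I, (S.image (· i)).card ≤ I.card
  · obtain ⟨f, hfI, hf⟩ := exists_cover_of_card_image_le I hI S hbox
    exact ⟨f, fun x _ => hfI x, hf⟩
  push Not at hbox
  obtain ⟨i, hi, hlt⟩ := hbox
  -- some slice `x i = c` has fewer than `(#I)!` points
  obtain ⟨c, hc, hslice⟩ : ∃ c ∈ S.image (· i),
      (S.filter (fun x => x i = c)).card < I.card.factorial := by
    refine Finset.exists_card_fiber_lt_of_card_lt_mul (hS.trans_le ?_)
    rw [Nat.factorial_succ]
    exact Nat.mul_le_mul_right _ hlt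
  have hcardI : (I.erase i).card + 1 = I.card := Finset.card_erase_add_one hi
  obtain ⟨g, hgI, hg⟩ := ihI (I.erase i) (Finset.erase_ssubset hi)
    (S.filter (fun x => x i = c)) (by rwa [hcardI])
  obtain ⟨z, hz, hzc⟩ := Finset.mem_image.1 hc
  have hss : S.filter (fun x => ¬ x i = c) ⊂ S :=
    Finset.filter_ssubset.2 ⟨z, hz, not_not.2 hzc⟩
  obtain ⟨h, hhI, hh⟩ := ihS _ hss ((Finset.card_lt_card hss).trans hS)
  simp only [Finset.mem_filter, Finset.mem_erase, and_imp] at hgI hg hhI hh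
  refine ⟨fun x => if x i = c then g x else h x, fun x hx => ?_, fun x hx y hy hxy => ?_⟩
  · dsimp only
    split_ifs with hxc
    · exact (hgI x hx hxc).2
    · exact hhI x hx hxc
  · dsimp only
    split_ifs with hxc hyc hyc
    · exact hg x hx hxc y hy hyc hxy
    · exact fun _ => ⟨i, (hgI x hx hxc).1.symm, fun heq => hyc (heq ▸ hxc)⟩
    · exact fun hxy' => ⟨i, hxy' ▸ (hgI y hy hyc).1.symm, fun heq => hxc (heq ▸ hyc)⟩
    · exact hh x hx hxc y hy hyc hxy

/-- Coverability passes to subsets. -/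
lemma Coverable.mono {d : ℕ} {S T : Set (Fin d → ℕ)} (hT : Coverable T) (hST : S ⊆ T) :
    Coverable S := by
  obtain ⟨f, hf⟩ := hT
  exact ⟨f, fun x hx y hy => hf x (hST hx) y (hST hy)⟩

/-- The grid `{0, …, d}^d` is not coverable. -/
lemma not_coverable_grid (d : ℕ) :
    ¬ Coverable (Fintype.piFinset (fun _ : Fin d => Finset.range (d + 1)) :
      Set (Fin d → ℕ)) := by
  rintro ⟨f, hf⟩
  set B := Fintype.piFinset (fun _ : Fin d => Finset.range (d + 1)) with hB
  have hfiber : ∀ i ∈ (Finset.univ : Finset (Fin d)),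
      (B.filter (fun x => f x = i)).card * (d + 1) ≤ B.card := by
    intro i _
    have hcard : (B.filter (fun x => f x = i)).card * (d + 1) =
        (B.filter (fun x => f x = i) ×ˢ Finset.range (d + 1)).card := by
      rw [Finset.card_product, Finset.card_range]
    rw [hcard]
    refine Finset.card_le_card_of_injOn (fun p => Function.update p.1 i p.2) ?_ ?_
    · rintro ⟨x, c⟩ hp
      simp only [Finset.coe_product, Set.mem_prod, Finset.mem_coe, Finset.mem_filter, hB,
        Fintype.mem_piFinset] at hp ⊢
      intro j
      by_cases hj : j = i
      · subst hj
        simpa using hp.2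
      · simpa [hj] using hp.1.1 j
    · rintro ⟨x, c⟩ hp ⟨y, e⟩ hq heq
      simp only [Finset.coe_product, Set.mem_prod, Finset.mem_coe, Finset.mem_filter] at hp hq heq
      have hce : c = e := by simpa using congrFun heq i
      have hxy : x = y := by
        by_contra hne
        obtain ⟨j, hj, hxj⟩ := hf x hp.1.1 y hq.1.1 hne (hp.1.2.trans hq.1.2.symm)
        rw [hp.1.2] at hj
        exact hxj (by simpa [hj] using congrFun heq j)
      rw [hxy, hce]
  have hsum := Finset.sum_le_card_nsmul _ _ _ hfiber
  rw [← Finset.sum_mul, ← Finset.card_eq_sum_card_fiberwise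
    (fun x _ => Finset.mem_coe.2 (Finset.mem_univ (f x))), Finset.card_univ, Fintype.card_fin, smul_eq_mul] at hsum
  have hpos : 0 < B.card := Finset.card_pos.2 ⟨fun _ => 0, by simp [hB]⟩
  nlinarith

/-- The sizes `t` for which all `t`-point sets are coverable are bounded. -/
lemma bddAbove_coverable_sizes (d : ℕ) (hd : 1 ≤ d) :
    BddAbove {t : ℕ | ∀ S : Set (Fin d → ℕ), S.Finite → S.ncard = t → Coverable S} := by
  have : Nonempty (Fin d) := ⟨⟨0, hd⟩⟩
  refine ⟨(Fintype.piFinset (fun _ : Fin d => Finset.range (d + 1))).card, fun t ht => ?_⟩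
  by_contra! hlt
  obtain ⟨S, hBS, hS⟩ := Infinite.exists_superset_card_eq _ t hlt.le
  exact not_coverable_grid d
    ((ht S S.finite_toSet (by rw [Set.ncard_coe_finset, hS])).mono (Finset.coe_subset.2 hBS))

/-- Lower bound of Lemma 6: every subset of `ℕ^d` of size `(d+1)! - 1` is
coverable; consequently `h(ℕ^d) ≥ (d+1)! - 1`. -/
theorem hcov_ge_factorial (d : ℕ) (hd : 1 ≤ d) :
    (∀ S : Set (Fin d → ℕ), S.Finite → S.ncard = (d + 1).factorial - 1 → Coverable S) ∧
      (d + 1).factorial - 1 ≤ hcov d := by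
  have : Nonempty (Fin d) := ⟨⟨0, hd⟩⟩
  have hall : ∀ S : Set (Fin d → ℕ), S.Finite →
      S.ncard = (d + 1).factorial - 1 → Coverable S := by
    intro S hfin hS
    lift S to Finset (Fin d → ℕ) using hfin
    rw [Set.ncard_coe_finset] at hS
    have hpos := Nat.factorial_pos (d + 1)
    obtain ⟨f, -, hf⟩ := exists_cover_of_card_lt_factorial Finset.univ S
      (by rw [Finset.card_univ, Fintype.card_fin]; omega)
    exact ⟨f, hf⟩
  exact ⟨hall, le_csSup (bddAbove_coverable_sizes d hd) hall⟩
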